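/- Let μ ∈ ℝ and σ > 0, and define f : ℝ → [0,1] by f(x) = max{ (4/9)(1 + z₊²)^{-1}, (4/3)(1 + z₊²)^{-1} − 1/3 } where z = (x−μ)/σ. Then for every α ∈ (0,1), sup over unimodal Borel probability measures Q with finite second moment, mean ≤ μ and variance ≤ σ² of Q({x : f(x) ≤ α}) equals α. Together with validity, f is a precise p-variable for H_U(μ,σ). -/

import Mathlib

open MeasureTheory Set
open scoped ENNReal

/-- Mean of a distribution on ℝ. -/
noncomputable def distMean (Q : Measure ℝ) : ℝ := ∫ x, x ∂Q

/-- Variance of a distribution on ℝ. -/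
noncomputable def distVar (Q : Measure ℝ) : ℝ := ∫ x, (x - distMean Q)^2 ∂Q

/-- `H(μ,σ)`: Borel probability measures on ℝ with finite second moment,
mean at most `μ`, and variance at most `σ²`. -/
def MemH (μ σ : ℝ) (Q : Measure ℝ) : Prop :=
  IsProbabilityMeasure Q ∧ Integrable (fun x => x^2) Q ∧
    distMean Q ≤ μ ∧ distVar Q ≤ σ^2

/-- A distribution on ℝ is unimodal: for some `x₀` it is a nonnegative multiple of
the Dirac mass at `x₀` plus a measure with a Lebesgue density that is nondecreasing
on `(-∞, x₀)` and nonincreasing on `(x₀, ∞)`. -/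
def Unimodal (Q : Measure ℝ) : Prop :=
  ∃ (x₀ : ℝ) (c : ℝ≥0∞) (f : ℝ → ℝ≥0∞),
    Q = c • Measure.dirac x₀ + volume.withDensity f ∧
    MonotoneOn f (Iio x₀) ∧ AntitoneOn f (Ioi x₀)

/-- `f = max{(4/9)P₀, (4P₀−1)/3}` with `P₀(x) = (1 + (((x−μ)/σ)₊)²)⁻¹`. -/
noncomputable def pU (μ σ : ℝ) (x : ℝ) : ℝ :=
  max ((4/9) * (1 + (max ((x - μ) / σ) 0)^2)⁻¹)
    ((4/3) * (1 + (max ((x - μ) / σ) 0)^2)⁻¹ - 1/3)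

/-- Primitive of the slack between the quadratic and the tail indicator. -/
noncomputable def slackPrimitive (a b y : ℝ) : ℝ := a / 3 * y ^ 3 - b * y - max y 1

theorem exists_quadratic_majorant (x : ℝ) : ∃ a b : ℝ, 0 ≤ a ∧ 0 ≤ b ∧
    (∀ P : ℝ, a * P - b ≤ max (4 / 9 * P) (4 / 3 * P - 1 / 3)) ∧
    b + (if 1 ≤ x then 1 else 0) ≤ a * x ^ 2 ∧
    (∀ y, x ≤ y → slackPrimitive a b x ≤ slackPrimitive a b y) ∧
    (∀ y, y ≤ x → slackPrimitive a b y ≤ slackPrimitive a b x) := by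
  unfold slackPrimitive
  rcases le_or_gt x 0 with hx0 | hx0
  · refine ⟨4 / 9, 0, by norm_num, le_rfl, fun P => ?_, ?_, fun y hy => ?_, fun y hy => ?_⟩
    · simp
    · rw [if_neg (by linarith)]; nlinarith [sq_nonneg x]
    · rw [max_eq_right (by linarith : x ≤ 1)]
      have hx3 : x ^ 3 ≤ 0 := by nlinarith [sq_nonneg x]
      rcases le_total y 1 with h | h
      · rw [max_eq_right h]
        have : x ^ 3 ≤ y ^ 3 := (Odd.strictMono_pow (by decide)).monotone hy
        linarith
      · rw [max_eq_left h]
        nlinarith [mul_nonneg (sq_nonneg (2 * y - 3)) (by linarith : 0 ≤ y + 3)]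
    · rw [max_eq_right (by linarith : x ≤ 1), max_eq_right (by linarith : y ≤ 1)]
      have : y ^ 3 ≤ x ^ 3 := (Odd.strictMono_pow (by decide)).monotone hy
      linarith
  rcases lt_or_ge x 1 with hx1 | hx1
  · have hd : 0 < 3 - 2 * x ^ 2 := by nlinarith
    obtain ⟨a, ha⟩ : ∃ a, a = 4 / (3 * (3 - 2 * x ^ 2)) := ⟨_, rfl⟩
    have had : a * (3 - 2 * x ^ 2) = 4 / 3 := by rw [ha]; field_simp
    have ha0 : 0 < a := by rw [ha]; nlinarith [sq_nonneg x]
    have hfac : ∀ y, a / 3 * y ^ 3 - a * x ^ 2 / 4 * y - (a / 3 * x ^ 3 - a * x ^ 2 / 4 * x)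
        = a / 12 * ((y - x) * (x + 2 * y) ^ 2) := fun y => by ring
    refine ⟨a, a * x ^ 2 / 4, ha0.le, by positivity, fun P => ?_, ?_, fun y hy => ?_,
      fun y hy => ?_⟩
    · have h1 : 4 / 9 ≤ a := by nlinarith [sq_nonneg x]
      have h2 : a ≤ 4 / 3 := by nlinarith
      have hl := le_max_left (4 / 9 * P) (4 / 3 * P - 1 / 3)
      have hr := le_max_right (4 / 9 * P) (4 / 3 * P - 1 / 3)
      have hb : a * x ^ 2 / 4 = 3 * a / 8 - 1 / 6 := by linarith
      rw [hb]
      nlinarith [mul_le_mul_of_nonneg_left hl (by linarith : 0 ≤ 3 / 2 - 9 * a / 8),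
        mul_le_mul_of_nonneg_left hr (by linarith : 0 ≤ 9 * a / 8 - 1 / 2)]
    · rw [if_neg (by linarith)]; nlinarith [mul_nonneg ha0.le (sq_nonneg x)]
    · rw [max_eq_right hx1.le]
      rcases le_total y 1 with h | h
      · rw [max_eq_right h]
        have : 0 ≤ a / 12 * ((y - x) * (x + 2 * y) ^ 2) :=
          mul_nonneg (by positivity) (mul_nonneg (by linarith) (sq_nonneg _))
        linarith [hfac y]
      · rw [max_eq_left h]
        have key : 0 ≤ (2 * y - 3) ^ 2 * (y + 3) + x ^ 2 * (15 * y - 18 - x) := by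
          rcases le_total (18 + x) (15 * y) with h' | h'
          · have h3 : 0 ≤ 15 * y - 18 - x := by linarith
            positivity
          · have : x ^ 2 * (18 + x - 15 * y) ≤ 1 * (18 + x - 15 * y) :=
              mul_le_mul_of_nonneg_right (by nlinarith) (by linarith)
            nlinarith [pow_nonneg (sub_nonneg.2 h) 3, sq_nonneg (y - 1)]
        have := mul_nonneg ha0.le key
        have e : 12 * (y - 1) = 9 * (a * (3 - 2 * x ^ 2)) * (y - 1) := by rw [had]; ring
        nlinarith
    · rw [max_eq_right hx1.le, max_eq_right (by linarith : y ≤ 1)]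
      have : 0 ≤ a / 12 * ((x - y) * (x + 2 * y) ^ 2) :=
        mul_nonneg (by positivity) (mul_nonneg (by linarith) (sq_nonneg _))
      linarith [hfac y]
  · refine ⟨4 / 3, 1 / 3, by norm_num, by norm_num, fun P => ?_, ?_, fun y hy => ?_,
      fun y hy => ?_⟩
    · exact le_max_right _ _
    · rw [if_pos hx1]; nlinarith
    · rw [max_eq_left hx1, max_eq_left (by linarith)]
      nlinarith [mul_nonneg (sub_nonneg.2 hy) (by nlinarith : 0 ≤ x ^ 2 + x * y + y ^ 2 - 3)]
    · rw [max_eq_left hx1]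
      rcases le_total y 1 with h | h
      · rw [max_eq_right h]
        nlinarith [mul_nonneg (sub_nonneg.2 h) (sq_nonneg (2 * y + 1)),
          mul_nonneg (sub_nonneg.2 hx1) (by nlinarith : 0 ≤ x ^ 2 + x - 2)]
      · rw [max_eq_left h]
        nlinarith [mul_nonneg (sub_nonneg.2 hy) (by nlinarith : 0 ≤ x ^ 2 + x * y + y ^ 2 - 3)]

theorem measure_le_of_forall_Ioc_subset {ν₁ ν₂ : Measure ℝ} {x₀ : ℝ}
    (h : ∀ y, x₀ < y → ν₁ (Ioc x₀ y) ≤ ν₂ (Ioo x₀ y)) {S : Set ℝ} (hS : S ⊆ Ioi x₀)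
    (hlow : ∀ x ∈ S, Ioc x₀ x ⊆ S) : ν₁ S ≤ ν₂ S := by
  have key : ∀ T : Set ℝ, T ⊆ Ioi x₀ → (∀ x ∈ T, Ioc x₀ x ⊆ T) → BddAbove T → ν₁ T ≤ ν₂ T := by
    intro T hT hl hb
    rcases T.eq_empty_or_nonempty with rfl | ⟨z, hz⟩
    · simp
    have h1 : T ⊆ Ioc x₀ (sSup T) := fun x hx => ⟨hT hx, le_csSup hb hx⟩
    have h2 : Ioo x₀ (sSup T) ⊆ T := fun x hx => by
      obtain ⟨w, hw, hxw⟩ := exists_lt_of_lt_csSup ⟨z, hz⟩ hx.2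
      exact hl w hw ⟨hx.1, hxw.le⟩
    exact (measure_mono h1).trans
      ((h _ (lt_of_lt_of_le (hT hz) (le_csSup hb hz))).trans (measure_mono h2))
  have hU : S = ⋃ n : ℕ, S ∩ Iic (n : ℝ) := by
    ext x
    simp only [mem_iUnion, mem_inter_iff, mem_Iic, exists_and_left]
    exact ⟨fun hx => ⟨hx, exists_nat_ge x⟩, fun hx => hx.1⟩
  have hm : Monotone fun n : ℕ => S ∩ Iic (n : ℝ) := fun m n hmn =>
    inter_subset_inter_right _ (Iic_subset_Iic.2 (by exact_mod_cast hmn))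
  rw [hU, hm.measure_iUnion, hm.measure_iUnion]
  refine iSup_mono fun n => key _ (inter_subset_left.trans hS) ?_ ⟨n, fun x hx => hx.2⟩
  exact fun x hx z hz => ⟨hlow x hx.1 hz, hz.2.trans hx.2⟩

theorem setLIntegral_Ioi_le_of_antitoneOn {ν₁ ν₂ : Measure ℝ} {x₀ : ℝ}
    (h : ∀ y, x₀ < y → ν₁ (Ioc x₀ y) ≤ ν₂ (Ioo x₀ y)) {f : ℝ → ℝ≥0∞}
    (hf : AntitoneOn f (Ioi x₀)) (hfin : ∀ x ∈ Ioi x₀, f x ≠ ∞) :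
    ∫⁻ x in Ioi x₀, f x ∂ν₁ ≤ ∫⁻ x in Ioi x₀, f x ∂ν₂ := by
  have e : ∀ ν : Measure ℝ, ∫⁻ x in Ioi x₀, f x ∂ν
      = ∫⁻ t in Ioi 0, (ν.restrict (Ioi x₀)) {x | t < (f x).toReal} := fun ν => by
    rw [← lintegral_eq_lintegral_meas_lt _ (.of_forall fun x => ENNReal.toReal_nonneg)
      (aemeasurable_restrict_of_antitoneOn measurableSet_Ioi hf).ennreal_toReal]
    exact setLIntegral_congr_fun measurableSet_Ioi fun x hx => (ENNReal.ofReal_toReal (hfin x hx)).symm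
  rw [e, e]
  refine lintegral_mono fun t => ?_
  rw [Measure.restrict_apply' measurableSet_Ioi, Measure.restrict_apply' measurableSet_Ioi]
  refine measure_le_of_forall_Ioc_subset h inter_subset_right fun x hx z hz => ⟨?_, hz.1⟩
  exact lt_of_lt_of_le hx.1
    (ENNReal.toReal_mono (hfin z hz.1) (hf (show z ∈ Ioi x₀ from hz.1) hx.2 hz.2))

theorem setLIntegral_Iio_le_of_monotoneOn {ν₁ ν₂ : Measure ℝ} {x₀ : ℝ}
    (h : ∀ y, y < x₀ → ν₁ (Ico y x₀) ≤ ν₂ (Ioo y x₀)) {f : ℝ → ℝ≥0∞}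
    (hf : MonotoneOn f (Iio x₀)) (hfin : ∀ x ∈ Iio x₀, f x ≠ ∞) :
    ∫⁻ x in Iio x₀, f x ∂ν₁ ≤ ∫⁻ x in Iio x₀, f x ∂ν₂ := by
  have e : ∀ ν : Measure ℝ, ∫⁻ x in Iio x₀, f x ∂ν
      = ∫⁻ x in Ioi (-x₀), f (-x) ∂(ν.map (MeasurableEquiv.neg ℝ)) := fun ν => by
    rw [MeasurableEquiv.restrict_map, lintegral_map_equiv]
    simp
  rw [e, e]
  refine setLIntegral_Ioi_le_of_antitoneOn (fun y hy => ?_) (fun x hx y hy hxy => ?_)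
    fun x hx => ?_
  · rw [MeasurableEquiv.map_apply, MeasurableEquiv.map_apply]
    simpa using h (-y) (by linarith)
  · simp only [mem_Ioi] at hx hy
    exact hf (show -y < x₀ by linarith) (show -x < x₀ by linarith) (neg_le_neg hxy)
  · simp only [mem_Ioi] at hx
    exact hfin _ (show -x < x₀ by linarith)

/-- A linear functional comparison extends from intervals ending at the mode to unimodal laws. -/
theorem lintegral_le_of_unimodal_density {x₀ : ℝ} {c : ℝ≥0∞} {f u v : ℝ → ℝ≥0∞}
    (hu : Measurable u) (hv : Measurable v)
    (hfl : MonotoneOn f (Iio x₀)) (hfr : AntitoneOn f (Ioi x₀))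
    (hfin : (volume.withDensity f) univ ≠ ∞) (h0 : u x₀ ≤ v x₀)
    (hr : ∀ y, x₀ < y → (volume.withDensity u) (Ioc x₀ y) ≤ (volume.withDensity v) (Ioo x₀ y))
    (hl : ∀ y, y < x₀ → (volume.withDensity u) (Ico y x₀) ≤ (volume.withDensity v) (Ioo y x₀)) :
    ∫⁻ x, u x ∂(c • Measure.dirac x₀ + volume.withDensity f)
      ≤ ∫⁻ x, v x ∂(c • Measure.dirac x₀ + volume.withDensity f) := by
  have hcover : (volume : Measure ℝ).restrict (Iio x₀ ∪ Ioi x₀) = volume := by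
    rw [Iio_union_Ioi, restrict_compl_singleton]
  have hmeas : AEMeasurable f volume := by
    rw [← hcover]
    exact (aemeasurable_union_iff).2 ⟨aemeasurable_restrict_of_monotoneOn measurableSet_Iio hfl,
      aemeasurable_restrict_of_antitoneOn measurableSet_Ioi hfr⟩
  have hint : ∀ s : Set ℝ, ∫⁻ x in s, f x ≠ ∞ := fun s => by
    refine ne_top_of_le_ne_top hfin ?_
    rw [withDensity_apply _ MeasurableSet.univ]
    exact lintegral_mono_set (subset_univ s)
  have hfin' : ∀ p q, p < q → ¬ ∀ x ∈ Ioo p q, f x = ∞ := fun p q hpq hx => by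
    apply hint (Ioo p q)
    rw [setLIntegral_congr_fun measurableSet_Ioo hx, lintegral_const]
    simp [ENNReal.top_mul, hpq]
  have hfinr : ∀ x ∈ Ioi x₀, f x ≠ ∞ := fun x hx htop =>
    hfin' x₀ x hx fun z hz => top_le_iff.1 (htop ▸ hfr (show z ∈ Ioi x₀ from hz.1) hx hz.2.le)
  have hfinl : ∀ x ∈ Iio x₀, f x ≠ ∞ := fun x hx htop =>
    hfin' x x₀ hx fun z hz => top_le_iff.1 (htop ▸ hfl hx (show z ∈ Iio x₀ from hz.2) hz.1.le)
  have e : ∀ w : ℝ → ℝ≥0∞, Measurable w → ∫⁻ x, w x ∂(volume.withDensity f)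
      = ∫⁻ x in Iio x₀, f x ∂(volume.withDensity w) +
        ∫⁻ x in Ioi x₀, f x ∂(volume.withDensity w) := fun w hw => by
    rw [lintegral_withDensity_eq_lintegral_mul₀ hmeas hw.aemeasurable,
      restrict_withDensity measurableSet_Iio, restrict_withDensity measurableSet_Ioi,
      lintegral_withDensity_eq_lintegral_mul₀ hw.aemeasurable hmeas.restrict,
      lintegral_withDensity_eq_lintegral_mul₀ hw.aemeasurable hmeas.restrict,
      ← lintegral_union measurableSet_Ioi, hcover, mul_comm]
    exact disjoint_left.2 fun x h1 h2 => lt_asymm (mem_Iio.1 h1) (mem_Ioi.1 h2)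
  rw [lintegral_add_measure, lintegral_add_measure, lintegral_smul_measure,
    lintegral_smul_measure, lintegral_dirac, lintegral_dirac, e u hu, e v hv]
  exact add_le_add (by gcongr) (add_le_add (setLIntegral_Iio_le_of_monotoneOn hl hfl hfinl)
    (setLIntegral_Ioi_le_of_antitoneOn hr hfr hfinr))

theorem withDensity_add_indicator_Ici_Icc_le {b s p q : ℝ} (hb : 0 ≤ b) (hpq : p ≤ q) :
    (volume.withDensity fun x => ENNReal.ofReal b + (Ici s).indicator 1 x) (Icc p q)
      ≤ ENNReal.ofReal (b * (q - p) + (max q s - max p s)) := by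
  have hm : max p s ≤ max q s := max_le_max_right _ hpq
  rw [withDensity_apply _ measurableSet_Icc, lintegral_add_left measurable_const,
    lintegral_indicator_one measurableSet_Ici, setLIntegral_const, Real.volume_Icc,
    ENNReal.ofReal_add (mul_nonneg hb (by linarith)) (by linarith), ENNReal.ofReal_mul hb]
  gcongr
  rw [Measure.restrict_apply measurableSet_Ici, ← Real.volume_Icc]
  exact measure_mono fun x hx => ⟨max_le hx.2.1 hx.1, le_max_of_le_left hx.2.2⟩

theorem withDensity_sq_Ioo {a c r p q : ℝ} (ha : 0 ≤ a) (hr : 0 < r) (hpq : p ≤ q) :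
    (volume.withDensity fun x => ENNReal.ofReal (a * ((x - c) / r) ^ 2)) (Ioo p q)
      = ENNReal.ofReal (r * (a / 3 * (((q - c) / r) ^ 3 - ((p - c) / r) ^ 3))) := by
  rw [withDensity_apply _ measurableSet_Ioo, restrict_Ioo_eq_restrict_Ioc,
    ← ofReal_integral_eq_lintegral_ofReal _ (.of_forall fun x => by positivity),
    ← intervalIntegral.integral_of_le hpq]
  · congr 1
    have : ∀ x ∈ uIcc p q, HasDerivAt (fun x => r * (a / 3 * ((x - c) / r) ^ 3))
        (a * ((x - c) / r) ^ 2) x := fun x _ => by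
      refine ((((((hasDerivAt_id x).sub_const c).div_const r).pow 3).const_mul
        (a / 3)).const_mul r).congr_deriv ?_
      simp only [id]
      push_cast
      field_simp
    rw [intervalIntegral.integral_eq_sub_of_hasDerivAt this
      (Continuous.intervalIntegrable (by fun_prop) _ _)]
    ring
  · exact (Continuous.integrableOn_Icc (by fun_prop)).mono_set Ioc_subset_Icc_self

/-- The Vysochanskij–Petunin inequality for the upper tail, about an arbitrary centre. -/
theorem Unimodal.measureReal_Ici_le {Q : Measure ℝ} [IsProbabilityMeasure Q] (hQ : Unimodal Q)
    {c r : ℝ} (hr : 0 < r) (hint : Integrable (fun x => ((x - c) / r) ^ 2) Q) :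
    Q.real (Ici (c + r)) ≤ max (4 / 9 * ∫ x, ((x - c) / r) ^ 2 ∂Q)
      (4 / 3 * (∫ x, ((x - c) / r) ^ 2 ∂Q) - 1 / 3) := by
  obtain ⟨x₀, w, f, hQf, hfl, hfr⟩ := hQ
  obtain ⟨a, b, ha, hb, hmax, hpt, hright, hleft⟩ := exists_quadratic_majorant ((x₀ - c) / r)
  refine le_trans ?_ (hmax _)
  have hscale : ∀ y, max y (c + r) = c + r * max ((y - c) / r) 1 := fun y => by
    rw [mul_max_of_nonneg _ _ hr.le, ← max_add_add_left, mul_div_cancel₀ _ hr.ne',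
      add_sub_cancel, mul_one]
  have hslack : ∀ p q, p ≤ q →
      slackPrimitive a b ((p - c) / r) ≤ slackPrimitive a b ((q - c) / r) →
      (volume.withDensity fun x => ENNReal.ofReal b + (Ici (c + r)).indicator 1 x) (Icc p q)
      ≤ (volume.withDensity fun x => ENNReal.ofReal (a * ((x - c) / r) ^ 2)) (Ioo p q) := by
    intro p q hpq hs
    rw [withDensity_sq_Ioo ha hr hpq]
    refine (withDensity_add_indicator_Ici_Icc_le hb hpq).trans (ENNReal.ofReal_le_ofReal ?_)
    have e : q - p = r * ((q - c) / r - (p - c) / r) := by field_simp; ring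
    rw [hscale, hscale, e]
    unfold slackPrimitive at hs
    linarith [mul_le_mul_of_nonneg_left hs hr.le]
  have hmono : ∀ y z : ℝ, y ≤ z → (y - c) / r ≤ (z - c) / r := fun y z h => by gcongr
  have hfin : (volume.withDensity f) univ ≠ ∞ := by
    refine ne_top_of_le_ne_top (measure_ne_top Q univ) ?_
    conv_rhs => rw [hQf]
    exact Measure.le_iff'.1 (Measure.le_add_left le_rfl) univ
  have key := lintegral_le_of_unimodal_density (c := w)
    (u := fun x => ENNReal.ofReal b + (Ici (c + r)).indicator 1 x)
    (v := fun x => ENNReal.ofReal (a * ((x - c) / r) ^ 2))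
    ((measurable_one.indicator measurableSet_Ici).const_add _) (by fun_prop)
    hfl hfr hfin ?_
    (fun y hy => (measure_mono Ioc_subset_Icc_self).trans
      (hslack _ _ hy.le (hright _ (hmono _ _ hy.le))))
    (fun y hy => (measure_mono Ico_subset_Icc_self).trans
      (hslack _ _ hy.le (hleft _ (hmono _ _ hy.le))))
  · rw [← hQf, lintegral_add_left measurable_const, lintegral_indicator_one measurableSet_Ici,
      lintegral_const, measure_univ, mul_one, ← ofReal_integral_eq_lintegral_ofReal
      (hint.const_mul a) (.of_forall fun x => by positivity), integral_const_mul,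
      ← ofReal_measureReal, ← ENNReal.ofReal_add hb measureReal_nonneg,
      ENNReal.ofReal_le_ofReal_iff (mul_nonneg ha (integral_nonneg fun x => sq_nonneg _))] at key
    linarith
  · have : (1 ≤ (x₀ - c) / r) ↔ c + r ≤ x₀ := by
      rw [le_div_iff₀ hr]
      constructor <;> intro h <;> linarith
    simp only [this] at hpt
    refine le_trans ?_ (ENNReal.ofReal_le_ofReal hpt)
    split_ifs at hpt ⊢ with h
    · rw [indicator_of_mem (mem_Ici.2 h), ENNReal.ofReal_add hb zero_le_one]; simp
    · rw [indicator_of_notMem (by simpa using h)]; simp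

theorem integrable_id_of_integrable_sq {Q : Measure ℝ} [IsFiniteMeasure Q]
    (h : Integrable (fun x => x ^ 2) Q) : Integrable (fun x => x) Q :=
  ((memLp_two_iff_integrable_sq measurable_id.aestronglyMeasurable).2 h).integrable (by norm_num)

theorem MemH.measureReal_Ici_le {μ σ t : ℝ} (hσ : 0 < σ) (ht : 0 < t) {Q : Measure ℝ}
    (hQ : MemH μ σ Q) (hU : Unimodal Q) :
    Q.real (Ici (μ + σ * t))
      ≤ max (4 / 9 * (1 + t ^ 2)⁻¹) (4 / 3 * (1 + t ^ 2)⁻¹ - 1 / 3) := by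
  obtain ⟨hprob, hsq, hmean, hvar⟩ := hQ
  have hid := integrable_id_of_integrable_sq hsq
  set m := distMean Q with hm
  obtain ⟨R, hR⟩ : ∃ R, R = μ + σ * t - m := ⟨_, rfl⟩
  have hRt : σ * t ≤ R := by linarith
  have hR0 : 0 < R := lt_of_lt_of_le (by positivity) hRt
  have hr : 0 < R + σ ^ 2 / R := by positivity
  have hdev : Integrable (fun x => (x - m) ^ 2) Q := by
    have : (fun x : ℝ => (x - m) ^ 2) = fun x => x ^ 2 - 2 * m * x + m ^ 2 := by ext; ring
    rw [this]
    exact (hsq.sub (hid.const_mul _)).add (integrable_const _)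
  have hexp : (fun x : ℝ => ((x - (m - σ ^ 2 / R)) / (R + σ ^ 2 / R)) ^ 2) = fun x =>
      ((R + σ ^ 2 / R) ^ 2)⁻¹ * ((x - m) ^ 2 + 2 * (σ ^ 2 / R) * (x - m) + (σ ^ 2 / R) ^ 2) := by
    ext x; field_simp; ring
  have hlin : Integrable (fun x => 2 * (σ ^ 2 / R) * (x - m)) Q :=
    (hid.sub (integrable_const m)).const_mul _
  have hint : Integrable (fun x => ((x - (m - σ ^ 2 / R)) / (R + σ ^ 2 / R)) ^ 2) Q := by
    rw [hexp]
    exact ((hdev.add hlin).add (integrable_const _)).const_mul _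
  have hcentre : ∫ x, (x - m) ∂Q = 0 := by
    rw [integral_sub hid (integrable_const m)]
    simp [hm, distMean]
  have hval : ∫ x, ((x - (m - σ ^ 2 / R)) / (R + σ ^ 2 / R)) ^ 2 ∂Q
      = ((R + σ ^ 2 / R) ^ 2)⁻¹ * (distVar Q + (σ ^ 2 / R) ^ 2) := by
    have hsum : Integrable (fun x => (x - m) ^ 2 + 2 * (σ ^ 2 / R) * (x - m)) Q := hdev.add hlin
    rw [hexp, integral_const_mul, integral_add hsum (integrable_const _),
      integral_add hdev hlin, integral_const_mul, hcentre]
    simp [distVar, hm]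
  have hle : ∫ x, ((x - (m - σ ^ 2 / R)) / (R + σ ^ 2 / R)) ^ 2 ∂Q ≤ (1 + t ^ 2)⁻¹ := by
    rw [hval]
    calc _ ≤ ((R + σ ^ 2 / R) ^ 2)⁻¹ * (σ ^ 2 + (σ ^ 2 / R) ^ 2) := by gcongr
      _ = σ ^ 2 / (σ ^ 2 + R ^ 2) := by field_simp; ring
      _ ≤ σ ^ 2 / (σ ^ 2 + (σ * t) ^ 2) := by gcongr
      _ = (1 + t ^ 2)⁻¹ := by field_simp
  have hmain := hU.measureReal_Ici_le hr hint
  have hs : m - σ ^ 2 / R + (R + σ ^ 2 / R) = μ + σ * t := by rw [hR]; ring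
  rw [hs] at hmain
  refine hmain.trans (max_le_max ?_ ?_) <;> linarith

theorem pU_le_iff {μ σ α t : ℝ} (hσ : 0 < σ) (ht : 0 < t)
    (hα : α = max (4 / 9 * (1 + t ^ 2)⁻¹) (4 / 3 * (1 + t ^ 2)⁻¹ - 1 / 3)) :
    {x | pU μ σ x ≤ α} = Ici (μ + σ * t) := by
  ext x
  have hz : (1 + max ((x - μ) / σ) 0 ^ 2)⁻¹ ≤ (1 + t ^ 2)⁻¹ ↔ μ + σ * t ≤ x := by
    rw [inv_le_inv₀ (by positivity) (by positivity), add_le_add_iff_left,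
      pow_le_pow_iff_left₀ ht.le (le_max_right _ _) two_ne_zero, le_max_iff, le_div_iff₀ hσ]
    constructor
    · rintro (h | h) <;> linarith
    · intro h; left; linarith
  rw [mem_ofPred_eq, mem_Ici, ← hz, pU, hα]
  constructor
  · intro h
    by_contra! hlt
    refine absurd h (not_le.2 (max_lt_max ?_ ?_)) <;> linarith
  · intro h
    refine max_le_max ?_ ?_ <;> linarith

theorem exists_tail_threshold {α : ℝ} (hα : α ∈ Ioo (0 : ℝ) 1) :
    ∃ t, 0 < t ∧ α = max (4 / 9 * (1 + t ^ 2)⁻¹) (4 / 3 * (1 + t ^ 2)⁻¹ - 1 / 3) := by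
  have key : ∀ P : ℝ, 0 < P → P < 1 → α = max (4 / 9 * P) (4 / 3 * P - 1 / 3) →
      ∃ t, 0 < t ∧ α = max (4 / 9 * (1 + t ^ 2)⁻¹) (4 / 3 * (1 + t ^ 2)⁻¹ - 1 / 3) := by
    intro P h0 h1 h
    have h2 : 0 < P⁻¹ - 1 := sub_pos.2 ((one_lt_inv₀ h0).2 h1)
    refine ⟨√(P⁻¹ - 1), Real.sqrt_pos.2 h2, ?_⟩
    rw [Real.sq_sqrt h2.le, add_sub_cancel, inv_inv, h]
  obtain ⟨h0, h1⟩ := hα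
  rcases le_total α (1 / 6) with h | h
  · refine key (9 / 4 * α) (by linarith) (by linarith) ?_
    rw [max_eq_left (by linarith)]; ring
  · refine key ((3 * α + 1) / 4) (by linarith) (by linarith) ?_
    rw [max_eq_right (by linarith)]; ring

/-- The mixture of a point mass at `x₀` and the uniform law on `(p, q)`, with weight `w` on the
latter. -/
noncomputable def diracUniform (x₀ p q w : ℝ) : Measure ℝ :=
  ENNReal.ofReal (1 - w) • Measure.dirac x₀ +
    volume.withDensity ((Ioo p q).indicator fun _ => ENNReal.ofReal (w / (q - p)))

theorem diracUniform_eq (x₀ p q w : ℝ) : diracUniform x₀ p q w =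
    ENNReal.ofReal (1 - w) • Measure.dirac x₀ +
      ENNReal.ofReal (w / (q - p)) • volume.restrict (Ioc p q) := by
  rw [diracUniform, withDensity_indicator measurableSet_Ioo, withDensity_const,
    restrict_Ioo_eq_restrict_Ioc]

theorem unimodal_diracUniform_left (p q w : ℝ) : Unimodal (diracUniform p p q w) := by
  refine ⟨p, _, _, rfl, fun x hx y hy _ => ?_, fun x hx y hy hxy => ?_⟩
  · rw [indicator_of_notMem fun h => lt_asymm (mem_Iio.1 hx) h.1]; exact zero_le
  · by_cases h : y ∈ Ioo p q
    · rw [indicator_of_mem h, indicator_of_mem (show x ∈ Ioo p q from ⟨hx, hxy.trans_lt h.2⟩)]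
    · rw [indicator_of_notMem h]; exact zero_le

theorem unimodal_diracUniform_right (p q w : ℝ) : Unimodal (diracUniform q p q w) := by
  refine ⟨q, _, _, rfl, fun x hx y hy hxy => ?_, fun x hx y hy _ => ?_⟩
  · by_cases h : x ∈ Ioo p q
    · rw [indicator_of_mem h, indicator_of_mem (show y ∈ Ioo p q from ⟨h.1.trans_le hxy, hy⟩)]
    · rw [indicator_of_notMem h]; exact zero_le
  · rw [indicator_of_notMem fun h => lt_asymm (mem_Ioi.1 hy) h.2]; exact zero_le

section diracUniform

variable {x₀ p q w : ℝ}

theorem isProbabilityMeasure_diracUniform (hpq : p < q) (h0 : 0 ≤ w) (h1 : w ≤ 1) :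
    IsProbabilityMeasure (diracUniform x₀ p q w) := by
  have : 0 < q - p := sub_pos.2 hpq
  refine ⟨?_⟩
  rw [diracUniform_eq]
  simp only [Measure.coe_add, Measure.coe_smul, Pi.add_apply, Pi.smul_apply, smul_eq_mul,
    measure_univ, mul_one, Measure.restrict_apply_univ, Real.volume_Ioc]
  rw [← ENNReal.ofReal_mul (by positivity), ← ENNReal.ofReal_add (by linarith)
    (by positivity), div_mul_cancel₀ _ this.ne']
  simp

theorem integrable_diracUniform {g : ℝ → ℝ} (hg : Continuous g) :
    Integrable g (diracUniform x₀ p q w) := by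
  rw [diracUniform_eq]
  refine Integrable.add_measure ?_ ?_
  · exact (integrable_dirac (by simp)).smul_measure ENNReal.ofReal_ne_top
  · exact Integrable.smul_measure (hg.integrableOn_Icc.mono_set Ioc_subset_Icc_self)
      ENNReal.ofReal_ne_top

theorem integral_diracUniform (hpq : p < q) (h0 : 0 ≤ w) (h1 : w ≤ 1) {g : ℝ → ℝ}
    (hg : Continuous g) : ∫ x, g x ∂(diracUniform x₀ p q w)
      = (1 - w) * g x₀ + w / (q - p) * ∫ x in p..q, g x := by
  have : 0 < q - p := sub_pos.2 hpq
  have hi := integrable_diracUniform (x₀ := x₀) (p := p) (q := q) (w := w) hg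
  rw [diracUniform_eq] at hi ⊢
  rw [integral_add_measure hi.left_of_add_measure hi.right_of_add_measure,
    integral_smul_measure, integral_smul_measure, integral_dirac,
    intervalIntegral.integral_of_le hpq.le, ENNReal.toReal_ofReal (by linarith),
    ENNReal.toReal_ofReal (by positivity), smul_eq_mul, smul_eq_mul]

theorem distMean_diracUniform (hpq : p < q) (h0 : 0 ≤ w) (h1 : w ≤ 1) :
    distMean (diracUniform x₀ p q w) = (1 - w) * x₀ + w * ((p + q) / 2) := by
  have : q - p ≠ 0 := (sub_pos.2 hpq).ne'
  rw [distMean, integral_diracUniform hpq h0 h1 continuous_id', integral_id]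
  field_simp
  ring

theorem distVar_diracUniform (hpq : p < q) (h0 : 0 ≤ w) (h1 : w ≤ 1) {m : ℝ}
    (hm : distMean (diracUniform x₀ p q w) = m) :
    distVar (diracUniform x₀ p q w) = (1 - w) * (x₀ - m) ^ 2 +
      w * (((q - m) ^ 2 + (q - m) * (p - m) + (p - m) ^ 2) / 3) := by
  have : q - p ≠ 0 := (sub_pos.2 hpq).ne'
  rw [distVar, hm, integral_diracUniform hpq h0 h1 (by fun_prop),
    intervalIntegral.integral_comp_sub_right (fun x => x ^ 2), integral_pow]
  field_simp
  ring

theorem memH_diracUniform {μ σ : ℝ} (hpq : p < q) (h0 : 0 ≤ w) (h1 : w ≤ 1)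
    (hmean : (1 - w) * x₀ + w * ((p + q) / 2) = μ)
    (hvar : (1 - w) * (x₀ - μ) ^ 2 +
      w * (((q - μ) ^ 2 + (q - μ) * (p - μ) + (p - μ) ^ 2) / 3) = σ ^ 2) :
    MemH μ σ (diracUniform x₀ p q w) := by
  have hm := (distMean_diracUniform (x₀ := x₀) hpq h0 h1).trans hmean
  exact ⟨isProbabilityMeasure_diracUniform hpq h0 h1, integrable_diracUniform (by fun_prop),
    hm.le, ((distVar_diracUniform hpq h0 h1 hm).trans hvar).le⟩

theorem measureReal_diracUniform_Ici {s : ℝ} (hpq : p < q) (h0 : 0 ≤ w) (h1 : w ≤ 1)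
    (hs : p < s) (hsq : s ≤ q) : (diracUniform x₀ p q w).real (Ici s)
      = (if s ≤ x₀ then 1 - w else 0) + w / (q - p) * (q - s) := by
  have : 0 < q - p := sub_pos.2 hpq
  have hI : Ici s ∩ Ioc p q = Icc s q := by
    ext x
    exact ⟨fun h => ⟨h.1, h.2.2⟩, fun h => ⟨h.1, hs.trans_le h.1, h.2⟩⟩
  rw [diracUniform_eq, measureReal_add_apply
    (by simpa using ENNReal.mul_ne_top ENNReal.ofReal_ne_top (measure_ne_top (.dirac x₀) (Ici s)))
    (by simp [ENNReal.mul_ne_top, hI]), measureReal_ennreal_smul_apply,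
    measureReal_ennreal_smul_apply, measureReal_restrict_apply measurableSet_Ici, hI,
    Real.volume_real_Icc_of_le hsq, ENNReal.toReal_ofReal (by linarith),
    ENNReal.toReal_ofReal (by positivity), measureReal_def,
    Measure.dirac_apply' _ measurableSet_Ici]
  split_ifs with h <;> simp [h]

end diracUniform

theorem exists_unimodal_measureReal_Ici_eq (μ : ℝ) {σ t : ℝ} (hσ : 0 < σ) (ht : 0 < t) :
    ∃ Q : Measure ℝ, MemH μ σ Q ∧ Unimodal Q ∧ Q.real (Ici (μ + σ * t))
      = max (4 / 9 * (1 + t ^ 2)⁻¹) (4 / 3 * (1 + t ^ 2)⁻¹ - 1 / 3) := by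
  obtain ⟨P, hP⟩ : ∃ P, P = (1 + t ^ 2)⁻¹ := ⟨_, rfl⟩
  have hP0 : 0 < P := by rw [hP]; positivity
  have hP1 : P < 1 := by rw [hP]; exact inv_lt_one_of_one_lt₀ (by nlinarith)
  obtain ⟨e, he0, hσt, hσ2⟩ : ∃ e, 0 < e ∧ σ * t = e * (1 - P) ∧ σ ^ 2 = e ^ 2 * P * (1 - P) := by
    refine ⟨σ * (1 + t ^ 2) / t, by positivity, ?_, ?_⟩
    · rw [hP]; field_simp; ring
    · rw [hP]; field_simp; ring
  rw [← hP, hσt]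
  have heP : 0 < e * P := mul_pos he0 hP0
  rcases le_total P (3 / 8) with h | h
  · refine ⟨diracUniform (μ - e * P) (μ - e * P) (μ - e * P + 3 / 2 * e) (4 / 3 * P),
      memH_diracUniform (by linarith) (by linarith) (by linarith) (by ring)
        (by rw [hσ2]; ring), unimodal_diracUniform_left _ _ _, ?_⟩
    rw [measureReal_diracUniform_Ici (by linarith) (by linarith) (by linarith) (by linarith)
      (by linarith), if_neg (by linarith), max_eq_left (by linarith)]
    field_simp
    ring
  · refine ⟨diracUniform (μ + e * (1 - P)) (μ - e * P - e / 2) (μ + e * (1 - P)) (4 / 3 * (1 - P)),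
      memH_diracUniform (by linarith) (by linarith) (by linarith) (by ring)
        (by rw [hσ2]; ring), unimodal_diracUniform_right _ _ _, ?_⟩
    rw [measureReal_diracUniform_Ici (by linarith) (by linarith) (by linarith) (by linarith)
      le_rfl, if_pos le_rfl, max_eq_right (by linarith)]
    ring

/-- for every `α ∈ (0,1)`,
`sup_{Q ∈ H_U(μ,σ)} Q({pU ≤ α}) = α`; together with validity, `pU` is a
precise p-variable for `H_U(μ,σ)`. -/
theorem stmt_12 (μ σ : ℝ) (hσ : 0 < σ) (α : ℝ) (hα : α ∈ Ioo (0:ℝ) 1) :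
    IsLUB {r : ℝ | ∃ Q : Measure ℝ, MemH μ σ Q ∧ Unimodal Q ∧
      r = (Q {x | pU μ σ x ≤ α}).toReal} α := by
  obtain ⟨t, ht, hαt⟩ := exists_tail_threshold hα
  rw [pU_le_iff hσ ht hαt]
  refine ⟨?_, fun U hU => ?_⟩
  · rintro r ⟨Q, hQ, hQU, rfl⟩
    rw [hαt]
    exact hQ.measureReal_Ici_le hσ ht hQU
  · obtain ⟨Q, hQ, hQU, hval⟩ := exists_unimodal_measureReal_Ici_eq μ hσ ht
    exact hU ⟨Q, hQ, hQU, hαt.trans hval.symm⟩
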